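/- There is a universal constant C > 0 such that the following holds. Let u_1, ..., u_m be column vectors in ℂ^d such that B = Σ_{i=1}^m u_i u_i* satisfies B ≤ I (i.e., I − B is positive semidefinite) and ‖u_i‖² ≤ ε for all i, and let t ∈ [0,1]. Then there exists a set of indices S ⊆ {1, ..., m} such that ‖Σ_{i ∈ S} u_i u_i* − t B‖ ≤ C ε^{1/4}. -/

import Mathlib

open ComplexOrder

/-- The outer product `u u*` of a vector `u ∈ ℂ^d` with itself, as a `d × d` matrix. -/
noncomputable def outer {d : ℕ} (u : EuclideanSpace ℂ (Fin d)) :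
    Matrix (Fin d) (Fin d) ℂ :=
  Matrix.of fun i j => u i * starRingEnd ℂ (u j)

/-- The operator norm of a matrix, acting on Euclidean space. -/
noncomputable def opNorm {d : ℕ} (A : Matrix (Fin d) (Fin d) ℂ) : ℝ :=
  ‖Matrix.toEuclideanCLM (𝕜 := ℂ) A‖

namespace KS

/-- Coordinate difference operator (equal to the partial derivative for multi-affine maps). -/
def D {𝕜 : Type*} [Ring 𝕜] {ι : Type*} [DecidableEq ι] (j : ι) (f : (ι → 𝕜) → 𝕜)
    (x : ι → 𝕜) : 𝕜 := f (x + Pi.single j 1) - f x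

/-- Multi-affine functions. -/
def Aff {𝕜 : Type*} [Ring 𝕜] {ι : Type*} [DecidableEq ι] (f : (ι → 𝕜) → 𝕜) : Prop :=
  ∀ x j c, f (x + Pi.single j c) = f x + c * D j f x

lemma D_comm {𝕜 : Type*} [Ring 𝕜] {ι : Type*} [DecidableEq ι] (i j : ι) (f : (ι → 𝕜) → 𝕜)
    (x : ι → 𝕜) : D i (D j f) x = D j (D i f) x := by
  simp only [D]
  rw [add_right_comm x (Pi.single i 1) (Pi.single j 1)]
  abel

lemma Aff.D {𝕜 : Type*} [CommRing 𝕜] {ι : Type*} [DecidableEq ι] {f : (ι → 𝕜) → 𝕜}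
    (h : Aff f) (j : ι) : Aff (D j f) := by
  intro x k c
  have h1 := h (x + Pi.single j 1) k c
  have h2 := h x k c
  rw [D_comm]
  simp only [KS.D] at *
  rw [add_right_comm x (Pi.single k c) (Pi.single j 1), h1, h2,
    add_right_comm x (Pi.single j 1) (Pi.single k 1)]
  ring

lemma Aff.D_self {𝕜 : Type*} [CommRing 𝕜] {ι : Type*} [DecidableEq ι] {f : (ι → 𝕜) → 𝕜}
    (h : Aff f) (j : ι) (x : ι → 𝕜) : KS.D j (KS.D j f) x = 0 := by
  have h2 := h x j 2
  simp only [KS.D] at *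
  rw [add_assoc, ← Pi.single_add, one_add_one_eq_two, h2]
  ring

/-- The averaging operator. -/
def T {𝕜 : Type*} [Ring 𝕜] {ι : Type*} [DecidableEq ι] (z w : ι) (f : (ι → 𝕜) → 𝕜)
    (x : ι → 𝕜) : 𝕜 := f x - D z f x - D w f x

lemma D_T {𝕜 : Type*} [Ring 𝕜] {ι : Type*} [DecidableEq ι] (z w j : ι) (f : (ι → 𝕜) → 𝕜)
    (x : ι → 𝕜) : D j (T z w f) x = D j f x - D j (D z f) x - D j (D w f) x := by
  simp only [T, D]; abel

lemma Aff.T {𝕜 : Type*} [CommRing 𝕜] {ι : Type*} [DecidableEq ι] {f : (ι → 𝕜) → 𝕜}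
    (h : Aff f) (z w : ι) : Aff (T z w f) := by
  intro x k c
  rw [D_T]
  simp only [KS.T]
  rw [h, h.D z, h.D w]
  ring

section real
variable {ι : Type*} [DecidableEq ι] 

/-- Multi-affine, with the strong Rayleigh property. -/
structure RGood (f : (ι → ℝ) → ℝ) : Prop where
  aff : Aff f
  ray : ∀ x i j, f x * D i (D j f) x ≤ D i f x * D j f x

/-- Positivity on the orthant above `a`. -/
def Above {ι : Type*} (f : (ι → ℝ) → ℝ) (a : ι → ℝ) : Prop := ∀ x, a ≤ x → 0 < f x

lemma Above.mono {ι : Type*} {f : (ι → ℝ) → ℝ} {a b : ι → ℝ} (h : Above f a) (hab : a ≤ b) : Above f b :=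
  fun x hx => h x (hab.trans hx)

lemma le_add_single (x : ι → ℝ) (k : ι) {c : ℝ} (hc : 0 ≤ c) : x ≤ x + Pi.single k c := by
  intro i
  by_cases h : i = k
  · subst h; simp [hc]
  · simp [h]

lemma step_induction [Fintype ι] (P : (ι → ℝ) → Prop) {x y : ι → ℝ} (hxy : x ≤ y) (h0 : P x)
    (hs : ∀ x', x ≤ x' → ∀ k c, 0 ≤ c → P x' → P (x' + Pi.single k c)) : P y := by
  have key : ∀ s : Finset ι, x ≤ x + ∑ k ∈ s, Pi.single k (y k - x k) ∧
      P (x + ∑ k ∈ s, Pi.single k (y k - x k)) := by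
    intro s
    induction s using Finset.induction_on with
    | empty => simpa using h0
    | insert a s ha ih =>
      rw [Finset.sum_insert ha, add_comm (Pi.single a _), ← add_assoc]
      have hc : 0 ≤ y a - x a := sub_nonneg.2 (hxy a)
      exact ⟨ih.1.trans (le_add_single _ _ hc), hs _ ih.1 _ _ hc ih.2⟩
  have := (key Finset.univ).2
  rw [Finset.univ_sum_single (fun k => y k - x k)] at this
  convert this using 1
  ext k; simp

lemma D_nonneg {f : (ι → ℝ) → ℝ} (hf : Aff f) {a x : ι → ℝ} (ha : Above f a) (hx : a ≤ x)
    (j : ι) : 0 ≤ D j f x := by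
  by_contra! h
  have h0 := ha x hx
  have hc : 0 ≤ f x / (-D j f x) := by apply div_nonneg <;> linarith
  have := ha _ (hx.trans (le_add_single x j hc))
  rw [hf] at this
  have h2 : f x / (-D j f x) * D j f x = - f x := by
    have hne := h.ne
    field_simp
  linarith

lemma ratio_mono [Fintype ι] {f : (ι → ℝ) → ℝ} (hf : RGood f) {a x y : ι → ℝ} (ha : Above f a)
    (hx : a ≤ x) (hxy : x ≤ y) (j : ι) : D j f y / f y ≤ D j f x / f x := by
  refine step_induction (fun y => D j f y / f y ≤ D j f x / f x) hxy le_rfl ?_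
  intro x' hx' k c hc h
  refine le_trans ?_ h
  have h1 := ha x' (hx.trans hx')
  have h2 := ha _ ((hx.trans hx').trans (le_add_single x' k hc))
  rw [div_le_div_iff₀ h2 h1, hf.aff, hf.aff.D j]
  have := mul_le_mul_of_nonneg_left (hf.ray x' k j) hc
  nlinarith

/-- Claim A. -/
lemma above_of_T [Fintype ι] {f : (ι → ℝ) → ℝ} (hf : RGood f) {a c : ι → ℝ} (hc : Above f c)
    (z w : ι) (hT : Above (T z w f) a) : Above f a := by
  have hc' : Above f (c ⊔ a) := hc.mono le_sup_left
  have hle : (0 : ι → ℝ) ≤ (c ⊔ a) - a := sub_nonneg.2 le_sup_right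
  have := step_induction (fun x => x ≤ (c ⊔ a) - a → Above f ((c ⊔ a) - x)) hle
    (by intro _; simpa using hc') ?_ le_rfl
  · simpa using this
  · intro x _ k r hr ih hxle
    have ih' := ih ((le_add_single x k hr).trans hxle)
    set p := (c ⊔ a) - x with hp
    have hap : a ≤ p - Pi.single k r := by
      rw [hp]; intro i; have := hxle i; simp at this ⊢; linarith
    have e : (c ⊔ a) - (x + Pi.single k r) = p - Pi.single k r := by rw [hp]; abel
    rw [e]
    intro y hy
    by_contra! hneg
    -- move up from y in direction k to a zero
    have hpos : 0 < f (y + Pi.single k r) := by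
      apply ih'
      intro i; have := hy i; simp at this ⊢; linarith
    rw [hf.aff] at hpos
    have hD : 0 < D k f y := by
      by_contra! hD
      nlinarith
    set s := - f y / D k f y with hs
    have hs0 : 0 ≤ s := by apply div_nonneg <;> linarith
    set b := y + Pi.single k s with hb
    have hfb : f b = 0 := by
      rw [hb, hf.aff, hs]; field_simp; ring
    have hab : a ≤ b := (hap.trans hy).trans (le_add_single y k hs0)
    have hDb : 0 < D k f b := by
      rw [hb, hf.aff.D k, hf.aff.D_self]; simpa using hD
    have key : ∀ j, 0 ≤ D j f b := by
      intro j
      have := hf.ray b k j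
      rw [hfb, zero_mul] at this
      exact nonneg_of_mul_nonneg_right this hDb
    have := hT b hab
    simp only [T, hfb] at this
    linarith [key z, key w]

/-- Claim B. -/
lemma select [Fintype ι] {f : (ι → ℝ) → ℝ} (hf : RGood f) {a c : ι → ℝ} (hc : Above f c)
    (z w : ι) (hT : Above (T z w f) a) {t : ℝ} (ht0 : 0 < t) (ht1 : t < 1) :
    Above f (a - Pi.single z (1 / t)) ∨ Above f (a - Pi.single w (1 / (1 - t))) := by
  have hA := above_of_T hf hc z w hT
  have main : ∀ j r, 0 < r → 0 < f a - r * D j f a → Above f (a - Pi.single j r) := by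
    intro j r hr h x hx
    have hx' : a ≤ x + Pi.single j r := by
      intro i; have := hx i; simp at this ⊢; linarith
    have h1 := ratio_mono hf hA le_rfl hx' j
    have hfa := hA a le_rfl
    have hfx := hA _ hx'
    have e : f x = f (x + Pi.single j r) - r * D j f (x + Pi.single j r) := by
      rw [hf.aff.D j, hf.aff.D_self, hf.aff]; ring
    rw [e]
    rw [div_le_div_iff₀ hfx hfa] at h1
    have : 0 < f a * (f (x + Pi.single j r) - r * D j f (x + Pi.single j r)) := by
      have h2 := mul_pos hfx h
      have h3 := mul_le_mul_of_nonneg_left h1 hr.le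
      nlinarith
    exact pos_of_mul_pos_right this hfa.le
  have h0 := hT a le_rfl
  simp only [T] at h0
  have ht1' : 0 < 1 - t := by linarith
  by_cases h : 0 < f a - 1 / t * D z f a
  · exact Or.inl (main z _ (by positivity) h)
  · refine Or.inr (main w _ (by positivity) ?_)
    push Not at h
    have h3 : t * (f a - 1 / t * D z f a) ≤ 0 := mul_nonpos_of_nonneg_of_nonpos ht0.le h
    have e3 : t * (f a - 1 / t * D z f a) = t * f a - D z f a := by field_simp
    have e4 : (1 - t) * (f a - 1 / (1 - t) * D w f a) = (1 - t) * f a - D w f a := by field_simp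
    have : 0 < (1 - t) * (f a - 1 / (1 - t) * D w f a) := by rw [e4]; linarith
    exact pos_of_mul_pos_right this ht1'.le

/-- Existence of a region of positivity is preserved. -/
lemma exists_above_T {f : (ι → ℝ) → ℝ} (hf : RGood f) {c : ι → ℝ} (hc : Above f c)
    (z w : ι) : Above (T z w f) (c + Pi.single z 2 + Pi.single w 2) := by
  have key : ∀ x j, c + Pi.single j 2 ≤ x → 2 * D j f x < f x := by
    intro x j hx
    have h1 : c ≤ x - Pi.single j 2 := by
      intro i; have := hx i; simp at this ⊢; linarith
    have h2 := hc _ h1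
    have e := hf.aff (x - Pi.single j 2) j 2
    have e2 := hf.aff.D j (x - Pi.single j 2) j 2
    rw [hf.aff.D_self] at e2
    simp only [sub_add_cancel] at e e2
    rw [e, e2]; linarith
  intro x hx
  have h1 := key x z (le_trans (le_add_single _ w (by norm_num)) hx)
  have h2 := key x w (le_trans (by 
    rw [add_right_comm]; exact le_add_single _ z (by norm_num)) hx)
  simp only [T]; linarith

lemma quad_ineq {A p E A' q E' δ : ℝ} (hA : 0 < A) (hp : 0 ≤ p) (hE : 0 ≤ E) (hδ : 0 ≤ δ)
    (hW : ∀ s : ℝ, 0 ≤ (p * A' - A * q) + 2 * s * (E * A' - A * E') + s ^ 2 * (E * q - p * E')) :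
    A * δ * ((p * A' - A * q) + 2 * δ * (E * A' - A * E') + δ ^ 2 * (E * q - p * E')) ≤
      (A' * (A + p * δ + E * δ ^ 2) - A * (A' + q * δ + E' * δ ^ 2)) *
        (A + p * δ + E * δ ^ 2) := by
  have hZrel : A * (E * q - p * E') = p * (E * A' - A * E') - E * (p * A' - A * q) := by ring
  set X := p * A' - A * q with hX
  set Y := E * A' - A * E' with hY
  set Z := E * q - p * E' with hZ
  have hX0 : 0 ≤ X := by simpa using hW 0
  have hdisc : discrim Z (2 * Y) X ≤ 0 := by
    apply discrim_le_zero
    intro s; have := hW s; nlinarith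
  have hYXZ : Y ^ 2 ≤ X * Z := by rw [discrim] at hdisc; nlinarith
  have hZ0 : 0 ≤ Z := by
    by_contra! h
    have h1 : X * Z ≤ 0 := mul_nonpos_of_nonneg_of_nonpos hX0 h.le
    have hY0 : Y = 0 := by nlinarith [sq_nonneg Y]
    have h2 : 0 ≤ Z * X := by nlinarith [sq_nonneg Y]
    have hX1 : X = 0 := by nlinarith
    have := hW 1
    rw [hY0, hX1] at this
    linarith
  have hY0 : 0 ≤ Y := by
    by_contra! h
    have h1 : A * Z ≤ 0 := by rw [hZrel]; nlinarith [mul_nonneg hE hX0]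
    have h2 : Z = 0 := by nlinarith
    rw [h2] at hYXZ
    nlinarith
  have hmain : A * Y ≤ p * X := by
    rcases hY0.eq_or_lt with h | h
    · rw [← h]; simpa using mul_nonneg hp hX0
    · have h1 : Y * (A * Y) ≤ Y * (p * X) := by
        have := mul_le_mul_of_nonneg_left hYXZ hA.le
        have h3 : A * (X * Z) = X * (p * Y - E * X) := by rw [← hZrel]; ring
        have h4 : 0 ≤ E * X ^ 2 := by positivity
        nlinarith
      exact le_of_mul_le_mul_left h1 h
  have hfin : (A' * (A + p * δ + E * δ ^ 2) - A * (A' + q * δ + E' * δ ^ 2)) *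
        (A + p * δ + E * δ ^ 2) - A * δ * (X + 2 * δ * Y + δ ^ 2 * Z) =
      δ ^ 2 * ((p * X - A * Y) + 2 * E * X * δ + E * Y * δ ^ 2) := by
    rw [hX, hY, hZ]; ring
  have : 0 ≤ δ ^ 2 * ((p * X - A * Y) + 2 * E * X * δ + E * Y * δ ^ 2) := by
    have : 0 ≤ p * X - A * Y := by linarith
    positivity
  linarith

/-- Barrier step. -/
lemma barrier [Fintype ι] {f : (ι → ℝ) → ℝ} (hf : RGood f) {b : ι → ℝ} (hb : Above f b)
    {z w : ι} {φ δ : ℝ} (hδ : 0 ≤ δ) (hφδ : 1 ≤ δ * (1 - 2 * φ))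
    (hz : D z f b ≤ φ * f b) (hw : D w f b ≤ φ * f b) :
    Above (T z w f) (b + Pi.single z δ + Pi.single w δ) ∧
    ∀ j, D j f b ≤ φ * f b →
      D j (T z w f) (b + Pi.single z δ + Pi.single w δ) ≤
        φ * T z w f (b + Pi.single z δ + Pi.single w δ) := by
  have hδ0 : 0 < δ := by
    rcases hδ.eq_or_lt with h | h
    · rw [← h] at hφδ; linarith
    · exact h
  have hφ : 0 < 1 - 2 * φ := by
    by_contra! h
    nlinarith
  have hA := hb b le_rfl
  have hbb : b ≤ b + Pi.single z δ + Pi.single w δ :=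
    (le_add_single _ z hδ).trans (le_add_single _ w hδ)
  have hrat : ∀ j, D j f b ≤ φ * f b → ∀ x, b ≤ x → D j f x ≤ φ * f x := by
    intro j hj x hx
    have h1 := ratio_mono hf hb le_rfl hx j
    have h2 : D j f b / f b ≤ φ := (div_le_iff₀ hA).2 hj
    exact (div_le_iff₀ (hb x hx)).1 (h1.trans h2)
  have hT : ∀ x, b ≤ x → (1 - 2 * φ) * f x ≤ T z w f x := by
    intro x hx
    have h1 := hrat z hz x hx
    have h2 := hrat w hw x hx
    simp only [T]; linarith
  refine ⟨fun x hx => lt_of_lt_of_le ?_ (hT x (hbb.trans hx)), ?_⟩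
  · exact mul_pos hφ (hb x (hbb.trans hx))
  intro j hj
  set b' := b + Pi.single z δ + Pi.single w δ with hb'
  -- expansions
  have ex : ∀ g : (ι → ℝ) → ℝ, Aff g → ∀ s : ℝ, g (b + Pi.single z s + Pi.single w s) =
      g b + (D z g b + D w g b) * s + D w (D z g) b * s ^ 2 := by
    intro g hg s
    rw [hg, hg, hg.D w, D_comm]; ring
  have hzz : ∀ g : (ι → ℝ) → ℝ, Aff g → ∀ s : ℝ, D z g (b + Pi.single z s + Pi.single w s) =
      D z g b + D w (D z g) b * s := by
    intro g hg s
    rw [hg.D z, hg.D z, hg.D_self, (hg.D z).D w, ← D_comm z w]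
    have : D z (D w (D z g)) b = 0 := by
      have : D z (D w (D z g)) b = D w (D z (D z g)) b := D_comm _ _ _ _
      rw [this]
      simp only [D, add_assoc]
      have h1 := hg.D_self z b
      have h2 := hg.D_self z (b + Pi.single w 1)
      simp only [D, add_assoc] at h1 h2
      rw [h1, h2]; ring
    rw [D_comm z w, this]; ring
  have hww : ∀ g : (ι → ℝ) → ℝ, Aff g → ∀ s : ℝ, D w g (b + Pi.single z s + Pi.single w s) =
      D w g b + D w (D z g) b * s := by
    intro g hg s
    rw [hg.D w, hg.D_self, hg.D w, D_comm]; ring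
  set A := f b
  set p := D z f b + D w f b with hp
  set E := D w (D z f) b with hE
  set A' := D j f b
  set q := D z (D j f) b + D w (D j f) b with hq
  set E' := D w (D z (D j f)) b with hE'
  have hgA : Aff (D j f) := hf.aff.D j
  have hp0 : 0 ≤ p := add_nonneg (D_nonneg hf.aff hb le_rfl z) (D_nonneg hf.aff hb le_rfl w)
  have hE0 : 0 ≤ E := by
    by_contra! h
    -- D z f is nonneg on the orthant, affine
    have h0 := D_nonneg hf.aff hb le_rfl z
    have hc : 0 ≤ (D z f b + 1) / (-E) := by apply div_nonneg <;> linarith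
    have h1 := D_nonneg hf.aff hb (le_add_single b w hc) z
    rw [hf.aff.D z] at h1
    have : (D z f b + 1) / (-E) * E = -(D z f b + 1) := by
      have hne := h.ne
      field_simp
    rw [← hE, this] at h1
    linarith
  have hW : ∀ s : ℝ, 0 ≤ (p * A' - A * q) + 2 * s * (E * A' - A * E')
      + s ^ 2 * (E * q - p * E') := by
    intro s
    have h1 := hf.ray (b + Pi.single z s + Pi.single w s) z j
    have h2 := hf.ray (b + Pi.single z s + Pi.single w s) w j
    rw [ex f hf.aff, hzz f hf.aff, ex _ hgA, hzz _ hgA] at h1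
    rw [ex f hf.aff, hww f hf.aff, ex _ hgA, hww _ hgA] at h2
    have h3 := add_le_add h1 h2
    have : ((p * A' - A * q) + 2 * s * (E * A' - A * E') + s ^ 2 * (E * q - p * E')) =
      ((p + 2 * E * s) * (A' + q * s + E' * s ^ 2) - (A + p * s + E * s ^ 2) * (q + 2 * E' * s)) := by
      ring
    rw [this]
    nlinarith
  have hQ := quad_ineq hA hp0 hE0 hδ hW
  have e1 : f b' = A + p * δ + E * δ ^ 2 := ex f hf.aff δ
  have e2 : D j f b' = A' + q * δ + E' * δ ^ 2 := ex _ hgA δ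
  have e3 : T z w f b' = f b' - (p + 2 * E * δ) := by
    simp only [T]; rw [hzz f hf.aff, hww f hf.aff, hp]; ring
  have e4 : D j (T z w f) b' = D j f b' - (q + 2 * E' * δ) := by
    rw [D_T, D_comm j z, D_comm j w, hzz _ hgA, hww _ hgA, hq]; ring
  have hW' := hW δ
  have hWe : ((p * A' - A * q) + 2 * δ * (E * A' - A * E') + δ ^ 2 * (E * q - p * E')) =
      (p + 2 * E * δ) * D j f b' - f b' * (q + 2 * E' * δ) := by
    rw [e1, e2]; ring
  rw [hWe] at hW' hQ
  rw [← e1, ← e2] at hQ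
  have hP := hb b' hbb
  have hTb := hT b' hbb
  have hT1 : f b' ≤ δ * T z w f b' := by
    have := mul_le_mul_of_nonneg_left hTb hδ
    nlinarith
  have hTpos : 0 < T z w f b' := lt_of_lt_of_le (mul_pos hφ hP) hTb
  have goal1 : A * D j (T z w f) b' ≤ A' * T z w f b' := by
    set W := (p + 2 * E * δ) * D j f b' - f b' * (q + 2 * E' * δ) with hWdef
    set P := f b'
    set Q := D j f b'
    set L := T z w f b'
    -- P * DL = Q * L + W
    have r1 : P * D j (T z w f) b' = Q * L + W := by
      rw [e4, e3, hWdef]; ring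
    have r2 : P * (P * (A * D j (T z w f) b')) ≤ P * (P * (A' * L)) := by
      have : P * (P * (A * D j (T z w f) b')) = P * A * (Q * L + W) := by rw [← r1]; ring
      rw [this]
      have s1 := mul_le_mul_of_nonneg_right hQ hTpos.le
      have s2 := mul_le_mul_of_nonneg_right hT1 (mul_nonneg hA.le hW')
      nlinarith
    exact le_of_mul_le_mul_left (le_of_mul_le_mul_left r2 hP) hP
  have : A * D j (T z w f) b' ≤ A * (φ * T z w f b') := by
    have := mul_le_mul_of_nonneg_right hj hTpos.le
    nlinarith
  exact le_of_mul_le_mul_left this hA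

end real
section cplx
variable {ι : Type*} [DecidableEq ι]

/-- Real multi-affine stable functions. -/
structure Good (F : (ι → ℂ) → ℂ) : Prop where
  aff : Aff F
  cont : Continuous F
  real : ∀ x : ι → ℝ, (F (fun i => (x i : ℂ))).im = 0
  stab : ∀ z, (∀ i, 0 < (z i).im) → F z ≠ 0

/-- Restriction to real points. -/
def re (F : (ι → ℂ) → ℂ) (x : ι → ℝ) : ℝ := (F (fun i => (x i : ℂ))).re

lemma ofReal_add_single (x : ι → ℝ) (j : ι) (c : ℝ) :
    (fun i => (((x + Pi.single j c : ι → ℝ) i : ℝ) : ℂ)) =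
      (fun i => (x i : ℂ)) + Pi.single j (c : ℂ) := by
  ext i
  by_cases h : i = j
  · subst h; simp
  · simp [h]

lemma re_D (F : (ι → ℂ) → ℂ) (j : ι) : re (D j F) = D j (re F) := by
  ext x
  simp only [re, D, ofReal_add_single]
  simp

lemma re_T (F : (ι → ℂ) → ℂ) (z w : ι) : re (T z w F) = T z w (re F) := by
  ext x
  have h1 := congrFun (re_D F z) x
  have h2 := congrFun (re_D F w) x
  simp only [re, T, Complex.sub_re] at *
  rw [h1, h2]

lemma D_cont {F : (ι → ℂ) → ℂ} (h : Continuous F) (j : ι) : Continuous (D j F) := by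
  unfold D
  fun_prop

lemma D_real {F : (ι → ℂ) → ℂ} (h : Good F) (j : ι) (x : ι → ℝ) :
    (D j F (fun i => (x i : ℂ))).im = 0 := by
  have h1 := h.real (x + Pi.single j 1)
  rw [ofReal_add_single] at h1
  simp only [D, Complex.sub_im, h.real x]
  simpa using h1

lemma im_strict {F : (ι → ℂ) → ℂ} (h : Good F) (j : ι) {z : ι → ℂ} (hz : ∀ i, 0 < (z i).im)
    (hD : D j F z ≠ 0) : (D j F z / F z).im < 0 := by
  have hF := h.stab z hz
  by_contra! hneg
  set r := D j F z / F z with hr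
  have hr0 : r ≠ 0 := div_ne_zero hD hF
  apply h.stab (z + Pi.single j (-r⁻¹))
  · intro i
    by_cases hi : i = j
    · subst hi
      simp only [Pi.add_apply, Pi.single_eq_same, Complex.add_im, Complex.neg_im, Complex.inv_im]
      have : 0 ≤ r.im / Complex.normSq r := div_nonneg hneg (Complex.normSq_nonneg _)
      have := hz i
      rw [neg_div, neg_neg]
      linarith
    · simpa [hi] using hz i
  · rw [h.aff, hr]; field_simp; ring

lemma im_le {F : (ι → ℂ) → ℂ} (h : Good F) (j : ι) {z : ι → ℂ} (hz : ∀ i, 0 < (z i).im) :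
    (D j F z / F z).im ≤ 0 := by
  by_cases hD : D j F z = 0
  · simp [hD]
  · exact (im_strict h j hz hD).le

lemma im_conj_le {F : (ι → ℂ) → ℂ} (h : Good F) (j : ι) {z : ι → ℂ} (hz : ∀ i, 0 ≤ (z i).im) :
    (D j F z * (starRingEnd ℂ) (F z)).im ≤ 0 := by
  let g : ℝ → ℝ := fun η => (D j F (z + fun _ => (η : ℂ) * Complex.I) *
    (starRingEnd ℂ) (F (z + fun _ => (η : ℂ) * Complex.I))).im
  have hg : Continuous g := by
    have h1 := h.cont
    have h2 := D_cont h.cont j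
    have h3 : Continuous fun η : ℝ => (z + fun _ => (η : ℂ) * Complex.I) := by fun_prop
    have h4 := h1.comp h3
    have h5 := h2.comp h3
    exact Complex.continuous_im.comp (h5.mul (Complex.continuous_conj.comp h4))
  have hpos : ∀ η : ℝ, 0 < η → g η ≤ 0 := by
    intro η hη
    have hz' : ∀ i, 0 < ((z + fun _ => (η : ℂ) * Complex.I : ι → ℂ) i).im := by
      intro i; have := hz i; simp; linarith
    have h1 := im_le h j hz'
    have h2 := h.stab _ hz'
    simp only [g]
    set w := z + fun _ => (η : ℂ) * Complex.I
    have : D j F w * (starRingEnd ℂ) (F w) = (D j F w / F w) * (Complex.normSq (F w) : ℂ) := by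
      rw [← Complex.mul_conj]; field_simp
    rw [this, Complex.im_mul_ofReal]
    exact mul_nonpos_of_nonpos_of_nonneg h1 (Complex.normSq_nonneg _)
  have h0 : g 0 ≤ 0 := by
    have ht : Filter.Tendsto g (nhdsWithin 0 (Set.Ioi 0)) (nhds (g 0)) :=
      hg.continuousAt.tendsto.mono_left nhdsWithin_le_nhds
    refine le_of_tendsto ht ?_
    filter_upwards [self_mem_nhdsWithin] with η hη using hpos η hη
  have e : (z + fun _ : ι => ((0 : ℝ) : ℂ) * Complex.I) = z := by ext i; simp
  simpa only [g, e] using h0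

lemma Good.rgood {F : (ι → ℂ) → ℂ} (h : Good F) : RGood (re F) where
  aff := by
    intro x j c
    rw [← re_D]
    simp only [re, ofReal_add_single]
    rw [h.aff]
    simp
  ray := by
    intro x i j
    rw [← re_D, ← re_D, ← re_D]
    have h1 := im_conj_le h j (z := (fun i => (x i : ℂ)) + Pi.single i Complex.I) (by
      intro k
      by_cases hk : k = i
      · subst hk; simp
      · simp [hk])
    rw [h.aff, h.aff.D j] at h1
    have r1 := h.real x
    have r2 := D_real h i x
    have r3 := D_real h j x
    have r4 : (D i (D j F) (fun i => (x i : ℂ))).im = 0 := by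
      have r5 := D_real h j (x + Pi.single i 1)
      rw [ofReal_add_single] at r5
      have : D i (D j F) (fun i => (x i : ℂ)) = D j F ((fun i => (x i : ℂ)) + Pi.single i 1)
        - D j F (fun i => (x i : ℂ)) := rfl
      rw [this, Complex.sub_im, r3]
      simpa using r5
    simp only [re]
    simp [r1, r2, r3, r4] at h1
    linarith

lemma Good.T {F : (ι → ℂ) → ℂ} (h : Good F) (z w : ι) : Good (T z w F) where
  aff := h.aff.T z w
  cont := (h.cont.sub (D_cont h.cont z)).sub (D_cont h.cont w)
  real := by
    intro x
    simp only [KS.T, Complex.sub_im, h.real x, D_real h]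
    simp
  stab := by
    intro x hx h0
    have hF := h.stab x hx
    have e : KS.T z w F x / F x = 1 - D z F x / F x - D w F x / F x := by
      simp only [KS.T]; field_simp
    rw [h0, zero_div] at e
    have him := congrArg Complex.im e
    simp only [Complex.zero_im, Complex.sub_im, Complex.one_im] at him
    have h1 := im_le h z hx
    have h2 := im_le h w hx
    by_cases hz : D z F x = 0
    · by_cases hw : D w F x = 0
      · simp [hz, hw] at e
      · have := im_strict h w hx hw; linarith
    · have := im_strict h z hx hz; linarith

lemma Good.prod {κ : Type*} [DecidableEq κ] {F : (ι → ℂ) → ℂ} {G : (κ → ℂ) → ℂ}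
    (hF : Good F) (hG : Good G) :
    Good (fun z : ι ⊕ κ → ℂ => F (fun i => z (Sum.inl i)) * G (fun i => z (Sum.inr i))) where
  aff := by
    have l1 : ∀ (z : ι ⊕ κ → ℂ) j c, (fun i => (z + Pi.single (Sum.inl j) c : ι ⊕ κ → ℂ) (Sum.inl i))
        = (fun i => z (Sum.inl i)) + Pi.single j c := by
      intro z j c; ext i
      by_cases h : i = j
      · subst h; simp
      · simp [h]
    have l2 : ∀ (z : ι ⊕ κ → ℂ) j c, (fun i => (z + Pi.single (Sum.inl j) c : ι ⊕ κ → ℂ) (Sum.inr i))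
        = (fun i => z (Sum.inr i)) := by
      intro z j c; ext i; simp
    have l3 : ∀ (z : ι ⊕ κ → ℂ) j c, (fun i => (z + Pi.single (Sum.inr j) c : ι ⊕ κ → ℂ) (Sum.inr i))
        = (fun i => z (Sum.inr i)) + Pi.single j c := by
      intro z j c; ext i
      by_cases h : i = j
      · subst h; simp
      · simp [h]
    have l4 : ∀ (z : ι ⊕ κ → ℂ) j c, (fun i => (z + Pi.single (Sum.inr j) c : ι ⊕ κ → ℂ) (Sum.inl i))
        = (fun i => z (Sum.inl i)) := by
      intro z j c; ext i; simp
    intro z j c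
    rcases j with j | j
    · simp only [D, l1, l2]
      rw [hF.aff]; simp only [D]; ring
    · simp only [D, l3, l4]
      rw [hG.aff]; simp only [D]; ring
  cont := by
    have h1 := hF.cont
    have h2 := hG.cont
    exact (h1.comp (by fun_prop)).mul (h2.comp (by fun_prop))
  real := by
    intro x
    have h1 := hF.real (fun i => x (Sum.inl i))
    have h2 := hG.real (fun i => x (Sum.inr i))
    simp [Complex.mul_im, h1, h2]
  stab := by
    intro z hz
    exact mul_ne_zero (hF.stab _ fun i => hz _) (hG.stab _ fun i => hz _)

end cplx

section tree
variable {m : ℕ}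

/-- Iterated averaging operators. -/
def TL (l : List (Fin m)) (F : (Fin m ⊕ Fin m → ℂ) → ℂ) : (Fin m ⊕ Fin m → ℂ) → ℂ :=
  l.foldr (fun i G => T (Sum.inl i) (Sum.inr i) G) F

lemma TL_good {F : (Fin m ⊕ Fin m → ℂ) → ℂ} (h : Good F) (l : List (Fin m)) : Good (TL l F) := by
  induction l with
  | nil => exact h
  | cons i l ih => exact ih.T _ _

lemma TL_exists {F : (Fin m ⊕ Fin m → ℂ) → ℂ} (h : Good F) (h0 : ∃ c, Above (re F) c)
    (l : List (Fin m)) : ∃ c, Above (re (TL l F)) c := by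
  induction l with
  | nil => exact h0
  | cons i l ih =>
    obtain ⟨c, hc⟩ := ih
    refine ⟨c + Pi.single (Sum.inl i) 2 + Pi.single (Sum.inr i) 2, ?_⟩
    · have := exists_above_T (TL_good h l).rgood hc (Sum.inl i) (Sum.inr i)
      rw [← re_T] at this
      exact this

lemma TL_barrier {F : (Fin m ⊕ Fin m → ℂ) → ℂ} (h : Good F) {b : Fin m ⊕ Fin m → ℝ}
    (hb : Above (re F) b) {φ δ : ℝ} (hδ : 0 ≤ δ) (hφδ : 1 ≤ δ * (1 - 2 * φ))
    (hφ : ∀ k, D k (re F) b ≤ φ * re F b) (l : List (Fin m)) (hl : l.Nodup) :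
    ∃ p : Fin m ⊕ Fin m → ℝ, (∀ k, p k ≤ b k + δ) ∧
      (∀ i, i ∉ l → p (Sum.inl i) = b (Sum.inl i) ∧ p (Sum.inr i) = b (Sum.inr i)) ∧
      Above (re (TL l F)) p ∧
      (∀ i, i ∉ l → D (Sum.inl i) (re (TL l F)) p ≤ φ * re (TL l F) p ∧
        D (Sum.inr i) (re (TL l F)) p ≤ φ * re (TL l F) p) := by
  induction l with
  | nil => exact ⟨b, fun k => by linarith, fun i _ => ⟨rfl, rfl⟩, hb, fun i _ => ⟨hφ _, hφ _⟩⟩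
  | cons i l ih =>
    rw [List.nodup_cons] at hl
    obtain ⟨p, h1, h2, h3, h4⟩ := ih hl.2
    have hB := barrier (TL_good h l).rgood h3 hδ hφδ (h4 i hl.1).1 (h4 i hl.1).2
    rw [← re_T] at hB
    have eT : TL (i :: l) F = T (Sum.inl i) (Sum.inr i) (TL l F) := rfl
    rw [eT]
    refine ⟨p + Pi.single (Sum.inl i) δ + Pi.single (Sum.inr i) δ, ?_, ?_, hB.1, ?_⟩
    · intro k
      rcases k with k | k
      · by_cases hk : k = i
        · subst hk; simp [(h2 k hl.1).1]
        · simpa [hk] using h1 (Sum.inl k)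
      · by_cases hk : k = i
        · subst hk; simp [(h2 k hl.1).2]
        · simpa [hk] using h1 (Sum.inr k)
    · intro k hk
      simp only [List.mem_cons, not_or] at hk
      simpa [hk.1] using h2 k hk.2
    · intro k hk
      simp only [List.mem_cons, not_or] at hk
      exact ⟨hB.2 _ (h4 k hk.2).1, hB.2 _ (h4 k hk.2).2⟩

lemma TL_select {F : (Fin m ⊕ Fin m → ℂ) → ℂ} (h : Good F) (h0 : ∃ c, Above (re F) c)
    {t : ℝ} (ht0 : 0 < t) (ht1 : t < 1) (l : List (Fin m)) (hl : l.Nodup) :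
    ∀ a : Fin m ⊕ Fin m → ℝ, Above (re (TL l F)) a → ∃ p : Fin m ⊕ Fin m → ℝ, Above (re F) p ∧
      (∀ i, i ∉ l → p (Sum.inl i) = a (Sum.inl i) ∧ p (Sum.inr i) = a (Sum.inr i)) ∧
      ∀ i ∈ l, (p (Sum.inl i) = a (Sum.inl i) - 1 / t ∧ p (Sum.inr i) = a (Sum.inr i)) ∨
        (p (Sum.inl i) = a (Sum.inl i) ∧ p (Sum.inr i) = a (Sum.inr i) - 1 / (1 - t)) := by
  induction l with
  | nil => exact fun a ha => ⟨a, ha, fun i _ => ⟨rfl, rfl⟩, by simp⟩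
  | cons i l ih =>
    intro a ha
    rw [List.nodup_cons] at hl
    obtain ⟨c, hc⟩ := TL_exists h h0 l
    have ha' : Above (T (Sum.inl i) (Sum.inr i) (re (TL l F))) a := by
      rw [← re_T]; exact ha
    rcases select (TL_good h l).rgood hc _ _ ha' ht0 ht1 with hs | hs
    · obtain ⟨p, h1, h2, h3⟩ := ih hl.2 _ hs
      refine ⟨p, h1, ?_, ?_⟩
      · intro k hk
        simp only [List.mem_cons, not_or] at hk
        simpa [hk.1] using h2 k hk.2
      · intro k hk
        rcases List.mem_cons.1 hk with rfl | hk'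
        · left; simpa using h2 k hl.1
        · have hne : k ≠ i := fun e => hl.1 (e ▸ hk')
          simpa [hne] using h3 k hk'
    · obtain ⟨p, h1, h2, h3⟩ := ih hl.2 _ hs
      refine ⟨p, h1, ?_, ?_⟩
      · intro k hk
        simp only [List.mem_cons, not_or] at hk
        simpa [hk.1] using h2 k hk.2
      · intro k hk
        rcases List.mem_cons.1 hk with rfl | hk'
        · right; simpa using h2 k hl.1
        · have hne : k ≠ i := fun e => hl.1 (e ▸ hk')
          simpa [hne] using h3 k hk'

/-- Main abstract conclusion. -/
lemma abstract_main {F : (Fin m ⊕ Fin m → ℂ) → ℂ} (h : Good F) {s : ℝ}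
    (hb : Above (re F) (fun _ => s)) {φ δ : ℝ} (hδ : 0 ≤ δ) (hφδ : 1 ≤ δ * (1 - 2 * φ))
    (hφ : ∀ k, D k (re F) (fun _ => s) ≤ φ * re F (fun _ => s))
    {t : ℝ} (ht0 : 0 < t) (ht1 : t < 1) :
    ∃ S : Finset (Fin m), Above (re F) (Sum.elim
      (fun i => s + δ - if i ∈ S then 1 / t else 0)
      (fun i => s + δ - if i ∈ S then 0 else 1 / (1 - t))) := by
  classical
  obtain ⟨p, h1, -, h3, -⟩ := TL_barrier h hb hδ hφδ hφ (List.finRange m) (List.nodup_finRange m)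
  have h3' : Above (re (TL (List.finRange m) F)) (fun _ => s + δ) := h3.mono h1
  obtain ⟨q, g1, -, g3⟩ := TL_select h ⟨_, hb⟩ ht0 ht1 _ (List.nodup_finRange m) _ h3'
  refine ⟨Finset.univ.filter (fun i => q (Sum.inl i) = s + δ - 1 / t), g1.mono ?_⟩
  have htt : 0 < 1 / t := by positivity
  have hne : ¬ (s + δ = s + δ - 1 / t) := by intro h; linarith
  intro k
  rcases k with k | k
  · rcases g3 k (List.mem_finRange k) with g | g
    · simp [g.1]
    · simp only [Finset.mem_filter, Finset.mem_univ, true_and, g.1, Sum.elim_inl, if_neg hne]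
      simp
  · rcases g3 k (List.mem_finRange k) with g | g
    · simp [g.1, g.2]
    · simp only [Finset.mem_filter, Finset.mem_univ, true_and, g.1, g.2, Sum.elim_inr, if_neg hne]
      simp

end tree
section mat
open Matrix
variable {d : ℕ}

/-- Quadratic form of a matrix. -/
noncomputable def qf (A : Matrix (Fin d) (Fin d) ℂ) (x : Fin d → ℂ) : ℂ := star x ⬝ᵥ (A *ᵥ x)

lemma qf_add (A B : Matrix (Fin d) (Fin d) ℂ) (x : Fin d → ℂ) :
    qf (A + B) x = qf A x + qf B x := by
  simp [qf, add_mulVec, dotProduct_add]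

lemma qf_sub (A B : Matrix (Fin d) (Fin d) ℂ) (x : Fin d → ℂ) :
    qf (A - B) x = qf A x - qf B x := by
  simp [qf, sub_mulVec, dotProduct_sub]

lemma qf_smul (c : ℂ) (A : Matrix (Fin d) (Fin d) ℂ) (x : Fin d → ℂ) :
    qf (c • A) x = c * qf A x := by
  simp [qf, smul_mulVec, dotProduct_smul]

lemma qf_sum {ι : Type*} (s : Finset ι) (A : ι → Matrix (Fin d) (Fin d) ℂ) (x : Fin d → ℂ) :
    qf (∑ i ∈ s, A i) x = ∑ i ∈ s, qf (A i) x := by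
  simp [qf, sum_mulVec, dotProduct_sum]

lemma outer_eq (u : EuclideanSpace ℂ (Fin d)) : outer u = vecMulVec u (star (u : Fin d → ℂ)) := by
  ext i j; simp [outer, vecMulVec_apply]

lemma outer_psd (u : EuclideanSpace ℂ (Fin d)) : (outer u).PosSemidef := by
  rw [outer_eq]; exact posSemidef_vecMulVec_self_star _

lemma qf_outer (u : EuclideanSpace ℂ (Fin d)) (x : Fin d → ℂ) :
    qf (outer u) x = (Complex.normSq (star (u : Fin d → ℂ) ⬝ᵥ x) : ℂ) := by
  rw [outer_eq, qf, vecMulVec_mulVec, dotProduct_smul, Complex.normSq_eq_conj_mul_self]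
  have : star x ⬝ᵥ (u : Fin d → ℂ) = (starRingEnd ℂ) (star (u : Fin d → ℂ) ⬝ᵥ x) := by
    rw [starRingEnd_apply, ← star_dotProduct_star, star_star, dotProduct_comm]
  rw [this]
  simp [mul_comm]

lemma qf_one (x : Fin d → ℂ) : qf 1 x = ((∑ i, Complex.normSq (x i) : ℝ) : ℂ) := by
  simp [qf, dotProduct, Complex.normSq_eq_conj_mul_self]

lemma psd_iff {A : Matrix (Fin d) (Fin d) ℂ} (hA : A.IsHermitian) :
    A.PosSemidef ↔ ∀ x, 0 ≤ (qf A x).re := by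
  constructor
  · intro h x
    exact h.re_dotProduct_nonneg x
  · intro h
    refine PosSemidef.of_dotProduct_mulVec_nonneg hA fun x => ?_
    rw [Complex.nonneg_iff]
    refine ⟨h x, ?_⟩
    have := hA.im_star_dotProduct_mulVec_self x
    exact this.symm

lemma gap {M : Matrix (Fin d) (Fin d) ℂ} (hM : M.PosDef) :
    ∃ c : ℝ, 0 < c ∧ ∀ x, c * (qf 1 x).re ≤ (qf M x).re := by
  rcases isEmpty_or_nonempty (Fin d) with he | hne
  · refine ⟨1, one_pos, fun x => ?_⟩
    simp [qf, dotProduct]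
  obtain ⟨i0, hi0⟩ := Finite.exists_min hM.1.eigenvalues
  refine ⟨hM.1.eigenvalues i0, hM.eigenvalues_pos i0, fun x => ?_⟩
  set c := hM.1.eigenvalues i0
  set U : Matrix (Fin d) (Fin d) ℂ := (hM.1.eigenvectorUnitary : Matrix (Fin d) (Fin d) ℂ)
  have hU : U * Uᴴ = 1 := by
    have := (Matrix.mem_unitaryGroup_iff (A := U)).1 hM.1.eigenvectorUnitary.2
    simpa [star_eq_conjTranspose] using this
  have hs : M = U * diagonal (RCLike.ofReal ∘ hM.1.eigenvalues) * Uᴴ := by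
    conv_lhs => rw [hM.1.spectral_theorem]
    rfl
  have h1 : (M - (c : ℂ) • 1).PosSemidef := by
    have e : M - (c : ℂ) • 1 =
        U * diagonal (fun i => ((hM.1.eigenvalues i - c : ℝ) : ℂ)) * Uᴴ := by
      have : diagonal (fun i => ((hM.1.eigenvalues i - c : ℝ) : ℂ)) =
          diagonal (RCLike.ofReal ∘ hM.1.eigenvalues) - (c : ℂ) • (1 : Matrix (Fin d) (Fin d) ℂ) := by
        ext i j
        by_cases h : i = j
        · subst h; simp
        · simp [h]
      rw [this, mul_sub, sub_mul, ← hs]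
      simp [hU]
    rw [e]
    apply PosSemidef.mul_mul_conjTranspose_same
    apply PosSemidef.diagonal
    intro i
    simpa using hi0 i
  have h2 := h1.re_dotProduct_nonneg x
  have h3 : (qf (M - (c : ℂ) • 1) x).re = (qf M x).re - c * (qf 1 x).re := by
    rw [qf_sub, qf_smul]; simp
  have h4 : 0 ≤ (qf (M - (c : ℂ) • 1) x).re := h2
  linarith

lemma path {M B : Matrix (Fin d) (Fin d) ℂ} (hM : M.IsHermitian) (hB : B.PosSemidef)
    (hB1 : (1 - B).PosSemidef) {r1 : ℝ} (hr1 : 0 ≤ r1) (h1 : (M + (r1 : ℂ) • B).PosSemidef)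
    (hdet : ∀ r : ℝ, 0 ≤ r → (M + (r : ℂ) • B).det ≠ 0) : M.PosSemidef := by
  have hher : ∀ r : ℝ, (M + (r : ℂ) • B).IsHermitian := by
    intro r
    refine hM.add ?_
    rw [IsHermitian, conjTranspose_smul, hB.1]
    simp
  have hq : ∀ (r : ℝ) x, (qf (M + (r : ℂ) • B) x).re = (qf M x).re + r * (qf B x).re := by
    intro r x; rw [qf_add, qf_smul]; simp
  let N : Set ℝ := {r | 0 ≤ r ∧ ∀ x, 0 ≤ (qf M x).re + r * (qf B x).re}
  have hNc : IsClosed N := by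
    have : N = Set.Ici 0 ∩ ⋂ x, {r : ℝ | 0 ≤ (qf M x).re + r * (qf B x).re} := by
      ext r; simp [N]
    rw [this]
    refine isClosed_Ici.inter (isClosed_iInter fun x => ?_)
    exact isClosed_le continuous_const (by fun_prop)
  have hNn : N.Nonempty := ⟨r1, hr1, fun x => by
    rw [← hq]; exact (psd_iff (hher r1)).1 h1 x⟩
  have hNb : BddBelow N := ⟨0, fun r hr => hr.1⟩
  have hmem := hNc.csInf_mem hNn hNb
  set ρ := sInf N
  rcases hmem.1.eq_or_lt with h0 | hpos
  · rw [psd_iff hM]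
    intro x
    have := hmem.2 x
    rw [← h0] at this
    simpa using this
  · exfalso
    have hpsd : (M + (ρ : ℂ) • B).PosSemidef :=
      (psd_iff (hher ρ)).2 fun x => by rw [hq]; exact hmem.2 x
    have hpd := hpsd.posDef_iff_det_ne_zero.2 (hdet ρ hmem.1)
    obtain ⟨c, hc, hcx⟩ := gap hpd
    have hlt : ρ - min c ρ < ρ := by have := lt_min hc hpos; linarith
    have : ρ - min c ρ ∈ N := by
      refine ⟨by linarith [min_le_right c ρ], fun x => ?_⟩
      have e1 := hcx x
      rw [hq] at e1
      have e2 := (psd_iff hB1.1).1 hB1 x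
      rw [qf_sub] at e2
      simp only [Complex.sub_re] at e2
      have e3 := (psd_iff hB.1).1 hB x
      have e4 : min c ρ * (qf B x).re ≤ c * (qf B x).re :=
        mul_le_mul_of_nonneg_right (min_le_left _ _) e3
      nlinarith
    exact absurd (csInf_le hNb this) (not_le.2 hlt)

lemma opNorm_le {A : Matrix (Fin d) (Fin d) ℂ} (hA : A.IsHermitian) {c : ℝ} (hc : 0 < c)
    (h1 : ∀ x, (qf A x).re ≤ c * (qf 1 x).re) (h2 : ∀ x, -(qf A x).re ≤ c * (qf 1 x).re) :
    opNorm A ≤ c := by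
  have hc1 : ((c : ℂ) • (1 : Matrix (Fin d) (Fin d) ℂ)).IsHermitian := by
    rw [IsHermitian, conjTranspose_smul]; simp
  have p1 : ((c : ℂ) • (1 : Matrix (Fin d) (Fin d) ℂ) - A).PosSemidef := by
    rw [psd_iff (hc1.sub hA)]
    intro x; have := h1 x
    rw [qf_sub, qf_smul]; simp; linarith
  have p2 : ((c : ℂ) • (1 : Matrix (Fin d) (Fin d) ℂ) + A).PosSemidef := by
    rw [psd_iff (hc1.add hA)]
    intro x; have := h2 x
    rw [qf_add, qf_smul]; simp; linarith
  have q1 := p2.conjTranspose_mul_mul_same ((c : ℂ) • (1 : Matrix (Fin d) (Fin d) ℂ) - A)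
  have q2 := p1.conjTranspose_mul_mul_same ((c : ℂ) • (1 : Matrix (Fin d) (Fin d) ℂ) + A)
  have q3 := q1.add q2
  have e : ((c : ℂ) • (1 : Matrix (Fin d) (Fin d) ℂ) - A)ᴴ * ((c : ℂ) • 1 + A) *
      ((c : ℂ) • 1 - A) + ((c : ℂ) • (1 : Matrix (Fin d) (Fin d) ℂ) + A)ᴴ * ((c : ℂ) • 1 - A) *
      ((c : ℂ) • 1 + A) = (2 * c : ℂ) • ((c ^ 2 : ℂ) • 1 - Aᴴ * A) := by
    rw [p1.1, p2.1, hA]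
    simp only [sub_mul, mul_sub, add_mul, mul_add, smul_mul_assoc, mul_smul_comm, one_mul, mul_one,
      smul_sub, smul_add, smul_smul]
    module
  rw [e] at q3
  refine ContinuousLinearMap.opNorm_le_bound _ hc.le fun x => ?_
  have h3 := q3.re_dotProduct_nonneg (x : Fin d → ℂ)
  have h4 : 0 ≤ (qf ((2 * c : ℂ) • ((c ^ 2 : ℂ) • 1 - Aᴴ * A)) (x : Fin d → ℂ)).re := h3
  have h5 : qf (Aᴴ * A) (x : Fin d → ℂ) = qf 1 (A *ᵥ (x : Fin d → ℂ)) := by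
    simp only [qf, one_mulVec, ← mulVec_mulVec, star_mulVec, dotProduct_mulVec]
  rw [qf_smul, qf_sub, qf_smul, h5] at h4
  have hn : ∀ y : EuclideanSpace ℂ (Fin d), (qf 1 (y : Fin d → ℂ)) = ((‖y‖ ^ 2 : ℝ) : ℂ) := by
    intro y
    rw [qf_one, EuclideanSpace.norm_sq_eq]
    simp [Complex.normSq_eq_norm_sq]
  have h6 : qf 1 (A *ᵥ (x : Fin d → ℂ)) =
      ((‖Matrix.toEuclideanCLM (𝕜 := ℂ) A x‖ ^ 2 : ℝ) : ℂ) := by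
    rw [← hn, ofLp_toEuclideanCLM]
  rw [h6, hn] at h4
  have h7 : 0 ≤ 2 * c * (c ^ 2 * ‖x‖ ^ 2 - ‖Matrix.toEuclideanCLM (𝕜 := ℂ) A x‖ ^ 2) := by
    have := h4
    norm_cast at this
  have h8 : 0 ≤ c ^ 2 * ‖x‖ ^ 2 - ‖Matrix.toEuclideanCLM (𝕜 := ℂ) A x‖ ^ 2 :=
    nonneg_of_mul_nonneg_right h7 (by positivity)
  apply le_of_sq_le_sq _ (by positivity)
  rw [mul_pow]; linarith

lemma det_affine (A : Matrix (Fin d) (Fin d) ℂ) (u v : Fin d → ℂ) : ∃ k : ℂ, ∀ c : ℂ,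
    (A + c • vecMulVec u v).det = A.det + c * k := by
  let M0 : Matrix (Fin d ⊕ Unit) (Fin d ⊕ Unit) ℂ := fromBlocks A 0 (replicateRow Unit v) 1
  have key : ∀ c : ℂ, (A + c • vecMulVec u v).det =
      (M0.updateCol (Sum.inr ()) (Sum.elim (0 : Fin d → ℂ) (1 : Unit → ℂ) + c • Sum.elim (-u) (0 : Unit → ℂ))).det := by
    intro c
    have e : M0.updateCol (Sum.inr ()) (Sum.elim (0 : Fin d → ℂ) (1 : Unit → ℂ) + c • Sum.elim (-u) (0 : Unit → ℂ)) =
        fromBlocks A (replicateCol Unit (-(c • u))) (replicateRow Unit v) 1 := by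
      ext i j
      rcases i with i | i <;> rcases j with j | j <;>
        simp [M0, updateCol_apply]
    rw [e, det_fromBlocks_one₂₂]
    congr 1
    ext i j
    simp [mul_apply, vecMulVec_apply]
    ring
  refine ⟨(M0.updateCol (Sum.inr ()) (Sum.elim (-u) (0 : Unit → ℂ))).det, fun c => ?_⟩
  rw [key, det_updateCol_add, det_updateCol_smul]
  congr 1
  have := key 0
  simpa using this.symm

end mat
section final
open Matrix
variable {d m : ℕ}

/-- The basic matrix pencil. -/
noncomputable def pen (s : ℝ) (u : Fin m → EuclideanSpace ℂ (Fin d)) (z : Fin m → ℂ) :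
    Matrix (Fin d) (Fin d) ℂ :=
  (s : ℂ) • (1 - ∑ i, outer (u i)) + ∑ i, z i • outer (u i)

/-- The basic determinantal function. -/
noncomputable def pdet (s : ℝ) (u : Fin m → EuclideanSpace ℂ (Fin d)) (z : Fin m → ℂ) : ℂ :=
  (pen s u z).det

lemma pen_add_single (s : ℝ) (u : Fin m → EuclideanSpace ℂ (Fin d)) (z : Fin m → ℂ) (j : Fin m)
    (c : ℂ) : pen s u (z + Pi.single j c) = pen s u z + c • outer (u j) := by
  simp only [pen, Pi.add_apply, add_smul, Finset.sum_add_distrib, ← add_assoc]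
  congr 1
  rw [Finset.sum_eq_single j]
  · simp
  · intro i _ h; simp [h]
  · simp

lemma sum_psd (u : Fin m → EuclideanSpace ℂ (Fin d)) (S : Finset (Fin m)) :
    (∑ i ∈ S, outer (u i)).PosSemidef := posSemidef_sum S fun i _ => outer_psd (u i)

lemma herm_smul {A : Matrix (Fin d) (Fin d) ℂ} (hA : A.IsHermitian) (c : ℝ) :
    ((c : ℂ) • A).IsHermitian := by
  rw [IsHermitian, conjTranspose_smul, hA]; simp

lemma pen_herm (s : ℝ) (u : Fin m → EuclideanSpace ℂ (Fin d)) (x : Fin m → ℝ) :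
    (pen s u (fun i => (x i : ℂ))).IsHermitian := by
  unfold pen
  refine (herm_smul (isHermitian_one.sub (sum_psd u _).1) s).add ?_
  rw [IsHermitian, conjTranspose_sum]
  exact Finset.sum_congr rfl fun i _ => herm_smul (outer_psd (u i)).1 (x i)

lemma qf_outer_re (u : EuclideanSpace ℂ (Fin d)) (x : Fin d → ℂ) : 0 ≤ (qf (outer u) x).re := by
  rw [qf_outer]; simpa using Complex.normSq_nonneg _

lemma pdet_good {s : ℝ} (hs : 0 < s) (u : Fin m → EuclideanSpace ℂ (Fin d)) :
    Good (pdet s u) where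
  aff := by
    intro z j c
    obtain ⟨k, hk⟩ := det_affine (pen s u z) (u j) (star (u j : Fin d → ℂ))
    rw [← outer_eq] at hk
    simp only [D, pdet, pen_add_single, hk]
    ring
  cont := by
    unfold pdet pen
    apply Continuous.matrix_det
    fun_prop
  real := by
    intro x
    have h := (pen_herm s u x)
    have h1 : star (pdet s u (fun i => (x i : ℂ))) = pdet s u (fun i => (x i : ℂ)) := by
      unfold pdet
      rw [← det_conjTranspose, h]
    exact Complex.conj_eq_iff_im.1 h1
  stab := by
    intro z hz h0
    obtain ⟨x, hx0, hx⟩ := Matrix.exists_mulVec_eq_zero_iff.2 h0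
    have hq : qf (pen s u z) x = 0 := by rw [qf, hx, dotProduct_zero]
    have e : qf (pen s u z) x = (s : ℂ) * (qf 1 x - ∑ i, qf (outer (u i)) x) +
        ∑ i, z i * qf (outer (u i)) x := by
      unfold pen
      rw [qf_add, qf_smul, qf_sub, qf_sum, qf_sum]
      simp only [qf_smul]
    rw [e] at hq
    simp only [qf_outer, qf_one] at hq
    have him := congrArg Complex.im hq
    have hterm : ∀ i, Complex.normSq (star (u i : Fin d → ℂ) ⬝ᵥ x) = 0 := by
      have hs0 : ∑ i, (z i).im * Complex.normSq (star (u i : Fin d → ℂ) ⬝ᵥ x) = 0 := by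
        rw [← Complex.ofReal_sum, ← Complex.ofReal_sub, ← Complex.ofReal_mul] at him
        simpa [Complex.im_sum] using him
      intro i
      have := (Finset.sum_eq_zero_iff_of_nonneg (fun i _ =>
        mul_nonneg (hz i).le (Complex.normSq_nonneg _))).1 hs0 i (Finset.mem_univ i)
      exact (mul_eq_zero.1 this).resolve_left (hz i).ne'
    simp only [hterm] at hq
    simp only [Complex.ofReal_zero, Finset.sum_const_zero, mul_zero, add_zero, sub_zero] at hq
    rw [← Complex.ofReal_mul] at hq
    have h3 := (mul_eq_zero.1 (Complex.ofReal_eq_zero.1 hq)).resolve_left hs.ne'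
    apply hx0
    ext i
    have := (Finset.sum_eq_zero_iff_of_nonneg (fun i _ => Complex.normSq_nonneg (x i))).1 h3 i
      (Finset.mem_univ i)
    simpa using this

lemma pdet_above {s : ℝ} (hs : 0 < s) (u : Fin m → EuclideanSpace ℂ (Fin d)) :
    Above (re (pdet s u)) (fun _ => s) := by
  intro x hx
  have e : pen s u (fun i => (x i : ℂ)) =
      (s : ℂ) • 1 + ∑ i, ((x i - s : ℝ) : ℂ) • outer (u i) := by
    simp only [pen, Complex.ofReal_sub, sub_smul, Finset.sum_sub_distrib, smul_sub,
      Finset.smul_sum]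
    abel
  have hpd : (pen s u (fun i => (x i : ℂ))).PosDef := by
    rw [e]
    refine PosDef.add_posSemidef ?_ ?_
    · exact PosDef.one.smul (by simpa using hs)
    · refine posSemidef_sum _ fun i _ => (outer_psd (u i)).smul ?_
      simpa using hx i
  have := hpd.det_pos
  exact (Complex.pos_iff.1 this).1

lemma pdet_D {s : ℝ} (hs : 0 < s) (u : Fin m → EuclideanSpace ℂ (Fin d)) {φ : ℝ}
    (hu : ∀ i, ‖u i‖ ^ 2 ≤ φ * s) (i : Fin m) :
    D i (re (pdet s u)) (fun _ => s) ≤ φ * re (pdet s u) (fun _ => s) := by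
  have e0 : pen s u (fun _ => (s : ℂ)) = (s : ℂ) • 1 := by
    simp [pen, smul_sub, Finset.smul_sum]
  have hsne : (s : ℂ) ≠ 0 := by exact_mod_cast hs.ne'
  have d0 : pdet s u (fun _ => (s : ℂ)) = ((s ^ d : ℝ) : ℂ) := by
    rw [pdet, e0, det_smul]; simp
  have hnorm : star (u i : Fin d → ℂ) ⬝ᵥ (u i : Fin d → ℂ) = ((‖u i‖ ^ 2 : ℝ) : ℂ) := by
    rw [EuclideanSpace.norm_sq_eq]
    simp [dotProduct, Complex.conj_mul']
  have d1 : pdet s u ((fun _ => (s : ℂ)) + Pi.single i 1) =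
      ((s ^ d * (1 + ‖u i‖ ^ 2 / s) : ℝ) : ℂ) := by
    rw [pdet, pen_add_single, e0, one_smul]
    have : (s : ℂ) • (1 : Matrix (Fin d) (Fin d) ℂ) + outer (u i) =
        (s : ℂ) • (1 + replicateCol Unit (((s : ℂ)⁻¹) • (u i : Fin d → ℂ)) *
          replicateRow Unit (star (u i : Fin d → ℂ))) := by
      rw [outer_eq, smul_add]
      congr 1
      ext a b
      simp [vecMulVec_apply, mul_apply]
      field_simp
    rw [this, det_smul, det_one_add_replicateCol_mul_replicateRow, dotProduct_smul, hnorm]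
    simp
    left
    field_simp
  rw [← re_D]
  simp only [re, D, d0, d1]
  rw [← Complex.ofReal_sub, Complex.ofReal_re, Complex.ofReal_re]
  have h1 : s ^ d * (1 + ‖u i‖ ^ 2 / s) - s ^ d = (‖u i‖ ^ 2 / s) * s ^ d := by ring
  rw [h1]
  refine mul_le_mul_of_nonneg_right ?_ (by positivity)
  rw [div_le_iff₀ hs]
  exact hu i

/-- The doubled function. -/
noncomputable def dbl (s : ℝ) (u : Fin m → EuclideanSpace ℂ (Fin d)) :
    (Fin m ⊕ Fin m → ℂ) → ℂ :=
  fun z => pdet s u (fun i => z (Sum.inl i)) * pdet s u (fun i => z (Sum.inr i))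

lemma dbl_re {s : ℝ} (hs : 0 < s) (u : Fin m → EuclideanSpace ℂ (Fin d))
    (x : Fin m ⊕ Fin m → ℝ) : re (dbl s u) x =
      re (pdet s u) (fun i => x (Sum.inl i)) * re (pdet s u) (fun i => x (Sum.inr i)) := by
  have h1 := (pdet_good hs u).real (fun i => x (Sum.inl i))
  simp only [re, dbl, Complex.mul_re, h1]
  simp

lemma dbl_D {s : ℝ} (hs : 0 < s) (u : Fin m → EuclideanSpace ℂ (Fin d)) {φ : ℝ}
    (hu : ∀ i, ‖u i‖ ^ 2 ≤ φ * s) (k : Fin m ⊕ Fin m) :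
    D k (re (dbl s u)) (fun _ => s) ≤ φ * re (dbl s u) (fun _ => s) := by
  have hpos := pdet_above hs u _ le_rfl
  rcases k with k | k
  · have h := pdet_D hs u hu k
    have e : (fun i => ((fun _ => s : Fin m ⊕ Fin m → ℝ) + Pi.single (Sum.inl k) 1 :
        Fin m ⊕ Fin m → ℝ) (Sum.inl i)) = (fun _ => s) + Pi.single k 1 := by
      ext i
      by_cases h : i = k
      · subst h; simp
      · simp [h]
    have e2 : (fun i => ((fun _ => s : Fin m ⊕ Fin m → ℝ) + Pi.single (Sum.inl k) 1 :
        Fin m ⊕ Fin m → ℝ) (Sum.inr i)) = (fun _ => s) := by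
      ext i; simp
    simp only [D] at h ⊢
    rw [dbl_re hs, dbl_re hs, e, e2]
    nlinarith
  · have h := pdet_D hs u hu k
    have e : (fun i => ((fun _ => s : Fin m ⊕ Fin m → ℝ) + Pi.single (Sum.inr k) 1 :
        Fin m ⊕ Fin m → ℝ) (Sum.inr i)) = (fun _ => s) + Pi.single k 1 := by
      ext i
      by_cases h : i = k
      · subst h; simp
      · simp [h]
    have e2 : (fun i => ((fun _ => s : Fin m ⊕ Fin m → ℝ) + Pi.single (Sum.inr k) 1 :
        Fin m ⊕ Fin m → ℝ) (Sum.inl i)) = (fun _ => s) := by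
      ext i; simp
    simp only [D] at h ⊢
    rw [dbl_re hs, dbl_re hs, e, e2]
    nlinarith

/-- From positivity of the determinant above a shifted point to a matrix inequality. -/
lemma conclude {s δ τ : ℝ} (hs : 0 < s) (hδ : 0 ≤ δ) (hτ : 0 < τ)
    (u : Fin m → EuclideanSpace ℂ (Fin d)) (hB1 : (1 - ∑ i, outer (u i)).PosSemidef)
    (S : Finset (Fin m))
    (h : Above (re (pdet s u)) (fun i => s + δ - if i ∈ S then 1 / τ else 0)) (x : Fin d → ℂ) :
    (qf (∑ i ∈ S, outer (u i)) x).re ≤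
      τ * (s * (qf 1 x).re + δ * (qf (∑ i, outer (u i)) x).re) := by
  classical
  set B := ∑ i, outer (u i) with hB
  set R := ∑ i ∈ S, outer (u i) with hR
  have hBp : B.PosSemidef := sum_psd u _
  have hRp : R.PosSemidef := sum_psd u _
  set M : Matrix (Fin d) (Fin d) ℂ :=
    (s : ℂ) • (1 - B) + (((s + δ : ℝ) : ℂ) • B - ((1 / τ : ℝ) : ℂ) • R) with hM
  have hpen : ∀ r : ℝ, pen s u (fun i => ((s + δ - (if i ∈ S then 1 / τ else 0) + r : ℝ) : ℂ)) =
      M + (r : ℂ) • B := by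
    intro r
    have e1 : ∑ i, ((s + δ - (if i ∈ S then 1 / τ else 0) + r : ℝ) : ℂ) • outer (u i) =
        ((s + δ : ℝ) : ℂ) • B - ((1 / τ : ℝ) : ℂ) • R + (r : ℂ) • B := by
      have e2 : ((1 / τ : ℝ) : ℂ) • R =
          ∑ i, (((if i ∈ S then 1 / τ else 0 : ℝ)) : ℂ) • outer (u i) := by
        rw [hR, Finset.smul_sum, ← Finset.sum_filter_add_sum_filter_not Finset.univ (· ∈ S)]
        have z1 : ∑ i with i ∉ S, (((if i ∈ S then 1 / τ else 0 : ℝ)) : ℂ) • outer (u i) = 0 :=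
          Finset.sum_eq_zero fun i hi => by simp [(Finset.mem_filter.1 hi).2]
        rw [z1, add_zero]
        have z2 : Finset.univ.filter (· ∈ S) = S := by ext; simp
        rw [z2]
        exact Finset.sum_congr rfl fun i hi => by simp [hi]
      rw [e2, hB, Finset.smul_sum, Finset.smul_sum, ← Finset.sum_sub_distrib,
        ← Finset.sum_add_distrib]
      refine Finset.sum_congr rfl fun i _ => ?_
      rw [← sub_smul, ← add_smul]
      congr 1
      push_cast; ring
    rw [pen, e1, hM, ← hB]
    abel
  have hMh : M.IsHermitian :=
    (herm_smul hB1.1 s).add ((herm_smul hBp.1 _).sub (herm_smul hRp.1 _))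
  have hdet : ∀ r : ℝ, 0 ≤ r → (M + (r : ℂ) • B).det ≠ 0 := by
    intro r hr h0
    have := h (fun i => s + δ - (if i ∈ S then 1 / τ else 0) + r) (by
      intro i; simp [hr])
    simp only [re, pdet, hpen, h0] at this
    simp at this
  have hBR : (B - R).PosSemidef := by
    have : B - R = ∑ i ∈ Finset.univ \ S, outer (u i) := by
      rw [hB, hR, sub_eq_iff_eq_add, Finset.sum_sdiff (Finset.subset_univ S)]
    rw [this]; exact sum_psd u _
  have hqM : ∀ x, (qf M x).re = s * ((qf 1 x).re - (qf B x).re) + ((s + δ) * (qf B x).re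
      - 1 / τ * (qf R x).re) := by
    intro x
    rw [hM, qf_add, qf_smul, qf_sub, qf_sub, qf_smul, qf_smul]
    simp only [Complex.add_re, Complex.sub_re, Complex.re_ofReal_mul]
  have hτ' : 0 < 1 / τ := by positivity
  have h1 : (M + ((1 / τ : ℝ) : ℂ) • B).PosSemidef := by
    rw [psd_iff (hMh.add (herm_smul hBp.1 _))]
    intro x
    have a1 := (psd_iff hB1.1).1 hB1 x
    have a2 := (psd_iff hBR.1).1 hBR x
    have a3 := (psd_iff hBp.1).1 hBp x
    rw [qf_sub, Complex.sub_re] at a1 a2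
    rw [qf_add, qf_smul, Complex.add_re, hqM, Complex.re_ofReal_mul]
    have b1 := mul_nonneg hs.le a1
    have b2 := mul_nonneg hτ'.le a2
    have b3 := mul_nonneg (add_nonneg hs.le hδ) a3
    linarith
  have hfin := (psd_iff hMh).1 (path hMh hBp hB1 hτ'.le h1 hdet) x
  rw [hqM] at hfin
  have h2 := mul_nonneg hτ.le hfin
  have e3 : τ * (s * ((qf 1 x).re - (qf B x).re) + ((s + δ) * (qf B x).re
      - 1 / τ * (qf R x).re)) = τ * (s * (qf 1 x).re + δ * (qf B x).re) - (qf R x).re := by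
    field_simp; ring
  rw [e3] at h2
  linarith

lemma main_bound {s δ φ t : ℝ} (hs : 0 < s) (hδ : 1 ≤ δ) (hφδ : 1 ≤ δ * (1 - 2 * φ))
    (ht0 : 0 < t) (ht1 : t < 1) (u : Fin m → EuclideanSpace ℂ (Fin d))
    (hu : ∀ i, ‖u i‖ ^ 2 ≤ φ * s) (hB1 : (1 - ∑ i, outer (u i)).PosSemidef) :
    ∃ S : Finset (Fin m),
      opNorm ((∑ i ∈ S, outer (u i)) - (t : ℂ) • ∑ i, outer (u i)) ≤ s + δ - 1 := by
  classical
  have hδ0 : 0 ≤ δ := by linarith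
  have hA : Above (re (dbl s u)) (fun _ => s) := by
    intro x hx
    rw [dbl_re hs]
    exact mul_pos (pdet_above hs u _ fun i => hx _) (pdet_above hs u _ fun i => hx _)
  have hg : Good (dbl s u) := (pdet_good hs u).prod (pdet_good hs u)
  obtain ⟨S, hS⟩ := abstract_main hg hA hδ0 hφδ (dbl_D hs u hu) ht0 ht1
  have hS1 : Above (re (pdet s u)) (fun i => s + δ - if i ∈ S then 1 / t else 0) := by
    intro x hx
    have hle : (fun _ : Fin m => s) ≤ (fun i => (s + δ)) := fun i => by simp; linarith
    have h1 := hS (Sum.elim x (fun _ => s + δ)) (by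
      intro k
      rcases k with k | k
      · exact hx k
      · have : 0 < 1 - t := by linarith
        simp only [Sum.elim_inr]
        split_ifs
        · simp
        · have : 0 < 1 / (1 - t) := by positivity
          linarith)
    rw [dbl_re hs] at h1
    exact pos_of_mul_pos_left h1 (pdet_above hs u _ hle).le
  have hS2 : Above (re (pdet s u)) (fun i => s + δ - if i ∈ Sᶜ then 1 / (1 - t) else 0) := by
    intro x hx
    have hle : (fun _ : Fin m => s) ≤ (fun i => (s + δ)) := fun i => by simp; linarith
    have h1 := hS (Sum.elim (fun _ => s + δ) x) (by
      intro k
      rcases k with k | k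
      · simp only [Sum.elim_inl]
        have : 0 < 1 / t := by positivity
        split_ifs
        · linarith
        · simp
      · have := hx k
        simp only [Finset.mem_compl] at this
        simp only [Sum.elim_inr]
        by_cases hk : k ∈ S
        · simpa [hk] using this
        · simpa [hk] using this)
    rw [dbl_re hs] at h1
    exact pos_of_mul_pos_right h1 (pdet_above hs u _ hle).le
  refine ⟨S, ?_⟩
  have hBp : (∑ i, outer (u i)).PosSemidef := sum_psd u _
  have c1 := conclude hs hδ0 ht0 u hB1 S hS1
  have c2 := conclude hs hδ0 (sub_pos.2 ht1) u hB1 Sᶜ hS2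
  have hsum : (∑ i, outer (u i)) = ∑ i ∈ S, outer (u i) + ∑ i ∈ Sᶜ, outer (u i) :=
    (Finset.sum_add_sum_compl S _).symm
  refine opNorm_le ((sum_psd u S).1.sub (herm_smul hBp.1 t)) (by linarith) ?_ ?_
  · intro x
    have a1 := (psd_iff hB1.1).1 hB1 x
    have a2 := (psd_iff hBp.1).1 hBp x
    have a3 := c1 x
    rw [qf_sub, Complex.sub_re] at a1
    rw [qf_sub, qf_smul, Complex.sub_re, Complex.re_ofReal_mul]
    set b := (qf (∑ i, outer (u i)) x).re
    set o := (qf 1 x).re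
    have e1 : 0 ≤ (1 - t) * (s * o + (δ - 1) * b) :=
      mul_nonneg (by linarith) (add_nonneg (mul_nonneg hs.le (by linarith))
        (mul_nonneg (by linarith) a2))
    have e2 : 0 ≤ (δ - 1) * (o - b) := mul_nonneg (by linarith) a1
    nlinarith
  · intro x
    have a1 := (psd_iff hB1.1).1 hB1 x
    have a2 := (psd_iff hBp.1).1 hBp x
    have a3 := c2 x
    have a4 : (qf (∑ i, outer (u i)) x).re = (qf (∑ i ∈ S, outer (u i)) x).re +
        (qf (∑ i ∈ Sᶜ, outer (u i)) x).re := by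
      rw [← Complex.add_re, ← qf_add, ← hsum]
    rw [qf_sub, Complex.sub_re] at a1
    rw [qf_sub, qf_smul, Complex.sub_re, Complex.re_ofReal_mul]
    set b := (qf (∑ i, outer (u i)) x).re
    set o := (qf 1 x).re
    have e1 : 0 ≤ t * (s * o + (δ - 1) * b) :=
      mul_nonneg ht0.le (add_nonneg (mul_nonneg hs.le (by linarith))
        (mul_nonneg (by linarith) a2))
    have e2 : 0 ≤ (δ - 1) * (o - b) := mul_nonneg (by linarith) a1
    nlinarith

lemma opNorm_zero : opNorm (0 : Matrix (Fin d) (Fin d) ℂ) = 0 := by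
  simp [opNorm]

end final

end KS

/-- There is a universal constant `C > 0` such that whenever `B = ∑ uᵢuᵢ* ≤ I`
(i.e. `I - B` is positive semidefinite), `‖uᵢ‖² ≤ ε` for all `i`, and `t ∈ [0,1]`,
there is a set of indices `S` with `‖∑_{i ∈ S} uᵢuᵢ* − t B‖ ≤ C ε^(1/4)`. -/
theorem stmt4 :
    ∃ C : ℝ, 0 < C ∧
      ∀ (d m : ℕ) (ε : ℝ) (u : Fin m → EuclideanSpace ℂ (Fin d))
        (B : Matrix (Fin d) (Fin d) ℂ),
        B = ∑ i, outer (u i) →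
        (1 - B).PosSemidef →
        (∀ i, ‖u i‖ ^ 2 ≤ ε) →
        ∀ t : ℝ, 0 ≤ t → t ≤ 1 →
          ∃ S : Finset (Fin m),
            opNorm ((∑ i ∈ S, outer (u i)) - (t : ℂ) • B)
              ≤ C * ε ^ ((1 : ℝ) / 4) := by
  refine ⟨4, by norm_num, ?_⟩
  intro d m ε u B hB hB1 hu t ht0 ht1
  subst hB
  rcases le_or_gt ε 0 with hε | hε
  · -- all vectors vanish
    have hu0 : ∀ i, outer (u i) = 0 := by
      intro i
      have h1 : ‖u i‖ ^ 2 ≤ 0 := (hu i).trans hε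
      have h2 : ‖u i‖ = 0 := by nlinarith [norm_nonneg (u i)]
      have h3 : u i = 0 := norm_eq_zero.1 h2
      ext a b
      simp [outer, h3]
    refine ⟨∅, ?_⟩
    simp only [hu0, Finset.sum_const_zero, smul_zero, sub_zero, KS.opNorm_zero]
    have : 0 ≤ ε ^ ((1 : ℝ) / 4) := by
      rcases hε.eq_or_lt with h | h
      · rw [h]; positivity
      · rw [Real.rpow_def_of_neg h]
        refine mul_nonneg (Real.exp_pos _).le (Real.cos_nonneg_of_mem_Icc ?_)
        constructor <;> nlinarith [Real.pi_pos]
    positivity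
  have hr0 : 0 ≤ ε ^ ((1 : ℝ) / 4) := Real.rpow_nonneg hε.le _
  rcases ht0.eq_or_lt with h | ht0
  · refine ⟨∅, ?_⟩
    rw [← h]
    simp only [Finset.sum_empty, Complex.ofReal_zero, zero_smul, sub_zero, KS.opNorm_zero]
    positivity
  rcases ht1.eq_or_lt with h | ht1
  · refine ⟨Finset.univ, ?_⟩
    rw [h]
    simp only [Complex.ofReal_one, one_smul, sub_self, KS.opNorm_zero]
    positivity
  set q := ε ^ ((1 : ℝ) / 4) with hq
  have hqpos : 0 < q := Real.rpow_pos_of_pos hε _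
  have hq4 : q ^ 4 = ε := by
    rw [hq, ← Real.rpow_natCast, ← Real.rpow_mul hε.le]; norm_num
  rcases le_or_gt (1 / 4 : ℝ) q with hbig | hsmall
  · refine ⟨∅, le_trans ?_ (show (1 : ℝ) ≤ 4 * q by linarith)⟩
    have hBp := KS.sum_psd u Finset.univ
    rw [Finset.sum_empty]
    refine KS.opNorm_le (Matrix.isHermitian_zero.sub (KS.herm_smul hBp.1 t)) one_pos ?_ ?_
    · intro x
      have a1 := (KS.psd_iff hB1.1).1 hB1 x
      have a2 := (KS.psd_iff hBp.1).1 hBp x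
      have a0 : KS.qf 0 x = 0 := by simp [KS.qf]
      rw [KS.qf_sub, Complex.sub_re] at a1
      rw [KS.qf_sub, KS.qf_smul, a0, Complex.sub_re, Complex.re_ofReal_mul, Complex.zero_re]
      nlinarith
    · intro x
      have a1 := (KS.psd_iff hB1.1).1 hB1 x
      have a2 := (KS.psd_iff hBp.1).1 hBp x
      have a0 : KS.qf 0 x = 0 := by simp [KS.qf]
      rw [KS.qf_sub, Complex.sub_re] at a1
      rw [KS.qf_sub, KS.qf_smul, a0, Complex.sub_re, Complex.re_ofReal_mul, Complex.zero_re]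
      nlinarith
  · have he : 0 < 1 - q ^ 2 := by nlinarith
    obtain ⟨S, hS⟩ := KS.main_bound (s := 2 * q ^ 2) (δ := 1 / (1 - q ^ 2)) (φ := q ^ 2 / 2)
      (by positivity) (by rw [le_div_iff₀ he]; nlinarith)
      (by
        have : 1 / (1 - q ^ 2) * (1 - 2 * (q ^ 2 / 2)) = 1 := by field_simp
        rw [this]) ht0 ht1 u
      (by intro i; refine (hu i).trans ?_; rw [← hq4]; apply le_of_eq; ring) hB1
    refine ⟨S, hS.trans ?_⟩
    have h1 : 1 / (1 - q ^ 2) ≤ 1 + 2 * q ^ 2 := by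
      have hq2 : q ^ 2 ≤ 1 / 2 := by nlinarith
      have h3 := mul_nonneg (sq_nonneg q) (sub_nonneg.2 hq2)
      rw [div_le_iff₀ he]
      nlinarith
    nlinarith
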